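/- (Upper bound for the diameter of a bounded metric measure space.) Let (X, d, μ) be a nonempty bounded metric measure space whose measure μ is doubling with constant C, let 0 < ε ≤ 1/2 and ρ > 0, and write E₁ = Exp_L(X; 1−ε, ρ) and E₂ = Exp_L(X; ε, ρ). Suppose 1 < min{E₁, E₂} and both E₁ and E₂ are finite. Then diam(X) ≤ 3ρ·max{ ln( C⁴·(1 − ε)·ε^{−1}·E₁ ) / ln E₁ , 2·ln( C³·3^{ln C / ln 2}·ε·E₂ ) / ln E₂ }, where diam(X) = sup{d(x, y) : x, y ∈ X}. -/

import Mathlib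

open MeasureTheory Metric Set Real

noncomputable section

/-- Isoperimetric enlargement `A_r = {x | d(x, A) ≤ r}`. -/
def enl {X : Type*} [MetricSpace X] (A : Set X) (r : ℝ) : Set X :=
  {x | Metric.infDist x A ≤ r}

/-- Concentration function `α^ε(r)`. -/
def concFn {X : Type*} [MetricSpace X] [MeasurableSpace X] (μ : Measure X) (ε r : ℝ) : ℝ :=
  sSup {v : ℝ | ∃ A : Set X, MeasurableSet A ∧ ε ≤ (μ A).toReal ∧ v = 1 - (μ (enl A r)).toReal}

/-- Lipschitz constant of a real-valued function. -/
def lipConst {X : Type*} [MetricSpace X] (f : X → ℝ) : ℝ :=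
  sSup {c : ℝ | ∃ x y : X, x ≠ y ∧ c = |f x - f y| / dist x y}

/-- `f` is Lipschitz (some finite Lipschitz constant). -/
def IsLip {X : Type*} [MetricSpace X] (f : X → ℝ) : Prop :=
  ∃ C : ℝ, ∀ x y : X, |f x - f y| ≤ C * dist x y

/-- `m` is a quantile of order `ε` of `f` for `μ`. -/
def IsQuantile {X : Type*} [MetricSpace X] [MeasurableSpace X] (μ : Measure X)
    (ε : ℝ) (f : X → ℝ) (m : ℝ) : Prop :=
  ε ≤ (μ {x | f x ≤ m}).toReal ∧ 1 - ε ≤ (μ {x | m ≤ f x}).toReal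

/-- Admissible constants for Gromov's expansion coefficient. -/
def expGSet {X : Type*} [MetricSpace X] [MeasurableSpace X] (μ : Measure X) (ε ρ : ℝ) : Set ℝ :=
  {e : ℝ | 1 ≤ e ∧ ∀ A : Set X, MeasurableSet A → ε ≤ (μ A).toReal →
    e * ε ≤ (μ (enl A ρ)).toReal}

/-- Gromov's expansion coefficient. -/
def expG {X : Type*} [MetricSpace X] [MeasurableSpace X] (μ : Measure X) (ε ρ : ℝ) : ℝ :=
  sSup (expGSet μ ε ρ)

/-- Admissible constants for Ledoux's expansion coefficient. -/
def expLSet {X : Type*} [MetricSpace X] [MeasurableSpace X] (μ : Measure X) (ε ρ : ℝ) : Set ℝ :=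
  {e : ℝ | 1 ≤ e ∧ ∀ B : Set X, MeasurableSet B → (μ (enl B ρ)).toReal ≤ ε →
    e * (μ B).toReal ≤ (μ (enl B ρ)).toReal}

/-- Ledoux's expansion coefficient. -/
def expL {X : Type*} [MetricSpace X] [MeasurableSpace X] (μ : Measure X) (ε ρ : ℝ) : ℝ :=
  sSup (expLSet μ ε ρ)

/-- Partial diameter of a Borel measure on ℝ. -/
def partDiam (ν : Measure ℝ) (κ : ℝ) : ℝ :=
  sInf {D : ℝ | 0 ≤ D ∧ ∃ A : Set ℝ, MeasurableSet A ∧ Metric.diam A ≤ D ∧ 1 - κ ≤ (ν A).toReal}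

/-- Observable diameter `ObsDiam(X; -κ)`. -/
def obsDiam {X : Type*} [MetricSpace X] [MeasurableSpace X] (μ : Measure X) (κ : ℝ) : ℝ :=
  sSup {v : ℝ | ∃ f : X → ℝ, LipschitzWith 1 f ∧ v = partDiam (μ.map f) κ}

/-- `μ` is doubling with constant `C`. -/
def IsDoubling {X : Type*} [MetricSpace X] [MeasurableSpace X] (μ : Measure X) (C : ℝ) : Prop :=
  1 ≤ C ∧ ∀ (x : X) (r : ℝ), 0 < r →
    (μ (Metric.closedBall x (2 * r))).toReal ≤ C * (μ (Metric.closedBall x r)).toReal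

/-!
Write `D` for the diameter of `X`. If the ball of radius `r + s` about some point has measure at
most `a`, then enlarging the ball of radius `r` by `ρ` about `s / ρ` times multiplies its measure by
`e` each time, for every admissible constant `e` at level `a`. Doubling bounds the initial measure
from below in terms of `D / r`, so `s` is at most logarithmic.

Apply this with `(r, s) = (D / 12, D / 6)` if some ball of radius `D / 4` has measure at most `ε`.
Otherwise take two points at distance more than `17 D / 24 = (D / 8 + D / 3) + D / 4`: the ball of
radius `D / 4` about one of them leaves measure at most `1 - ε` to the ball of radius
`D / 8 + D / 3` about the other, and the same estimate applies with `(r, s) = (D / 8, D / 3)`.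
-/

section RealEstimates

theorem le_rpow_log_div_log {a b x : ℝ} (ha : 1 < a) (hab : a ≤ b) (hx : 1 ≤ x) :
    x ≤ b ^ (log x / log a) :=
  calc
    x = a ^ logb a x := (rpow_logb (by positivity) ha.ne' (by positivity)).symm
    _ ≤ b ^ logb a x := rpow_le_rpow (by positivity) hab (logb_nonneg ha hx)

theorem lt_log_mul_div_log_of_pow_floor_le {e t M : ℝ} (he : 1 < e) (h : e ^ ⌊t⌋₊ ≤ M) :
    t < log (M * e) / log e := by
  have hlog : 0 < log e := log_pos he
  rw [lt_div_iff₀ hlog]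
  calc
    t * log e < (⌊t⌋₊ + 1 : ℕ) * log e := by
      gcongr
      exact_mod_cast Nat.lt_floor_add_one t
    _ = log (e ^ ⌊t⌋₊ * e) := by rw [← log_pow, pow_succ]
    _ ≤ log (M * e) := by gcongr

theorem log_mul_div_log_le_log_mul_div_log {e a b : ℝ} (he : 1 < e) (ha : 0 < a) (hab : a ≤ b) :
    log (a * e) / log e ≤ log (b * e) / log e := by
  have hlog : 0 < log e := log_pos he
  gcongr

end RealEstimates

section MetricGeometry

theorem exists_lt_dist_of_lt_diam {X : Type*} [PseudoMetricSpace X] {s : Set X} {c : ℝ}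
    (hc : 0 ≤ c) (h : c < diam s) : ∃ x ∈ s, ∃ y ∈ s, c < dist x y := by
  contrapose! h
  exact diam_le_of_forall_dist_le hc h

variable {X : Type*} [MetricSpace X]

theorem subset_enl {ρ : ℝ} (hρ : 0 ≤ ρ) (A : Set X) : A ⊆ enl A ρ :=
  fun _ hx => (infDist_zero_of_mem hx).trans_le hρ

theorem enl_closedBall_subset (z : X) {r : ℝ} (hr : 0 ≤ r) (ρ : ℝ) :
    enl (closedBall z r) ρ ⊆ closedBall z (r + ρ) := by
  intro x (hx : infDist x (closedBall z r) ≤ ρ)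
  have hlower : dist x z - r ≤ infDist x (closedBall z r) :=
    (le_infDist ⟨z, mem_closedBall_self hr⟩).2 fun y hy => by
      linarith [dist_triangle x y z, mem_closedBall.1 hy]
  rw [mem_closedBall]
  linarith

-- `enl ∅ ρ` is everything because `infDist x ∅ = 0`.
theorem enl_eq_univ_of_subsingleton [Subsingleton X] {ρ : ℝ} (hρ : 0 ≤ ρ) (A : Set X) :
    enl A ρ = univ := by
  rcases A.eq_empty_or_nonempty with rfl | hA
  · exact eq_univ_of_forall fun _ => infDist_empty.trans_le hρ
  · exact Subsingleton.eq_univ_of_nonempty (hA.mono (subset_enl hρ A))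

end MetricGeometry

section Expansion

variable {X : Type*} [MetricSpace X] [MeasurableSpace X] {μ : Measure X} {a e ρ : ℝ}

theorem isClosed_expLSet (μ : Measure X) (a ρ : ℝ) : IsClosed (expLSet μ a ρ) := by
  simp only [expLSet, ofPred_and, ofPred_forall]
  exact isClosed_Ici.inter <| isClosed_iInter fun B => isClosed_iInter fun _ =>
    isClosed_iInter fun _ => isClosed_le (by fun_prop) continuous_const

theorem one_mem_expLSet [IsFiniteMeasure μ] (hρ : 0 ≤ ρ) : 1 ∈ expLSet μ a ρ :=
  ⟨le_rfl, fun B _ _ => (one_mul _).trans_le (measureReal_mono (subset_enl hρ B))⟩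

theorem expL_mem_expLSet [IsFiniteMeasure μ] (hρ : 0 ≤ ρ) (hbdd : BddAbove (expLSet μ a ρ)) :
    expL μ a ρ ∈ expLSet μ a ρ :=
  (isClosed_expLSet μ a ρ).csSup_mem ⟨1, one_mem_expLSet hρ⟩ hbdd

theorem nontrivial_of_bddAbove_expLSet [IsProbabilityMeasure μ] (hρ : 0 ≤ ρ) (ha : a < 1)
    (hbdd : BddAbove (expLSet μ a ρ)) : Nontrivial X := by
  by_contra htriv
  rw [not_nontrivial_iff_subsingleton] at htriv
  have hall : Ici 1 ⊆ expLSet μ a ρ := fun c hc => ⟨hc, fun B _ hB => by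
    rw [enl_eq_univ_of_subsingleton hρ B, measure_univ, ENNReal.toReal_one] at hB
    linarith⟩
  exact not_bddAbove_Ici 1 (hbdd.mono hall)

theorem pow_mul_measureReal_closedBall_le [OpensMeasurableSpace X] [IsFiniteMeasure μ]
    (hρ : 0 ≤ ρ) (he : e ∈ expLSet μ a ρ) (z : X) {r : ℝ} (hr : 0 ≤ r) (k : ℕ)
    (hk : μ.real (closedBall z (r + k * ρ)) ≤ a) :
    e ^ k * μ.real (closedBall z r) ≤ μ.real (closedBall z (r + k * ρ)) := by
  induction k with
  | zero => simp
  | succ k ih =>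
    have hstep : enl (closedBall z (r + k * ρ)) ρ ⊆ closedBall z (r + (k + 1 : ℕ) * ρ) := by
      convert enl_closedBall_subset z (by positivity : 0 ≤ r + k * ρ) ρ using 2
      push_cast
      ring
    have henl : μ.real (enl (closedBall z (r + k * ρ)) ρ) ≤ a := (measureReal_mono hstep).trans hk
    have hprev : μ.real (closedBall z (r + k * ρ)) ≤ a :=
      (measureReal_mono (subset_enl hρ _)).trans henl
    have he0 : 0 ≤ e := zero_le_one.trans he.1
    calc
      e ^ (k + 1) * μ.real (closedBall z r) = e * (e ^ k * μ.real (closedBall z r)) := by ring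
      _ ≤ e * μ.real (closedBall z (r + k * ρ)) := by gcongr; exact ih hprev
      _ ≤ μ.real (enl (closedBall z (r + k * ρ)) ρ) := he.2 _ measurableSet_closedBall henl
      _ ≤ μ.real (closedBall z (r + (k + 1 : ℕ) * ρ)) := measureReal_mono hstep

end Expansion

namespace IsDoubling

variable {X : Type*} [MetricSpace X] [MeasurableSpace X] {μ : Measure X} {C : ℝ}

theorem measureReal_closedBall_two_pow_mul_le (hC : IsDoubling μ C) (z : X) (n : ℕ) {r : ℝ}
    (hr : 0 < r) : μ.real (closedBall z (2 ^ n * r)) ≤ C ^ n * μ.real (closedBall z r) := by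
  induction n with
  | zero => simp
  | succ n ih =>
    have hC0 : 0 ≤ C := zero_le_one.trans hC.1
    calc
      μ.real (closedBall z (2 ^ (n + 1) * r)) = μ.real (closedBall z (2 * (2 ^ n * r))) := by
        rw [pow_succ', mul_assoc]
      _ ≤ C * μ.real (closedBall z (2 ^ n * r)) := hC.2 z _ (by positivity)
      _ ≤ C * (C ^ n * μ.real (closedBall z r)) := by gcongr
      _ = C ^ (n + 1) * μ.real (closedBall z r) := by ring

theorem one_le_pow_mul_measureReal_closedBall [IsProbabilityMeasure μ] (hC : IsDoubling μ C)
    (hbdd : Bornology.IsBounded (univ : Set X)) (z : X) {n : ℕ} {r : ℝ} (hr : 0 < r)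
    (hdiam : diam (univ : Set X) ≤ 2 ^ n * r) : 1 ≤ C ^ n * μ.real (closedBall z r) := by
  have huniv : closedBall z (2 ^ n * r) = univ := eq_univ_of_forall fun x =>
    (dist_le_diam_of_mem hbdd (mem_univ x) (mem_univ z)).trans hdiam
  simpa only [huniv, probReal_univ] using hC.measureReal_closedBall_two_pow_mul_le z n hr

variable [OpensMeasurableSpace X] [IsProbabilityMeasure μ]

theorem lt_mul_log_div_log_of_measureReal_closedBall_le (hC : IsDoubling μ C)
    (hbdd : Bornology.IsBounded (univ : Set X)) {a e ρ : ℝ} (hρ : 0 < ρ)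
    (he : e ∈ expLSet μ a ρ) (he1 : 1 < e) {z : X} {n : ℕ} {r s : ℝ} (hr : 0 < r) (hs : 0 ≤ s)
    (hdiam : diam (univ : Set X) ≤ 2 ^ n * r) (hball : μ.real (closedBall z (r + s)) ≤ a) :
    s < ρ * (log (C ^ n * a * e) / log e) := by
  have hC0 : 0 ≤ C := zero_le_one.trans hC.1
  have hfloor : ⌊s / ρ⌋₊ * ρ ≤ s := (le_div_iff₀ hρ).1 (Nat.floor_le (by positivity))
  have hsub : μ.real (closedBall z (r + ⌊s / ρ⌋₊ * ρ)) ≤ a :=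
    (measureReal_mono (closedBall_subset_closedBall (by linarith))).trans hball
  have hpow : e ^ ⌊s / ρ⌋₊ ≤ C ^ n * a :=
    calc
      e ^ ⌊s / ρ⌋₊ ≤ e ^ ⌊s / ρ⌋₊ * (C ^ n * μ.real (closedBall z r)) :=
        le_mul_of_one_le_right (by positivity)
          (hC.one_le_pow_mul_measureReal_closedBall hbdd z hr hdiam)
      _ = C ^ n * (e ^ ⌊s / ρ⌋₊ * μ.real (closedBall z r)) := by ring
      _ ≤ C ^ n * a := by
        gcongr
        exact (pow_mul_measureReal_closedBall_le hρ.le he z hr.le _ hsub).trans hsub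
  rw [← div_lt_iff₀' hρ]
  exact lt_log_mul_div_log_of_pow_floor_le he1 hpow

theorem diam_univ_lt_mul_max [Nontrivial X] (hC : IsDoubling μ C)
    (hbdd : Bornology.IsBounded (univ : Set X)) {ε ρ e₁ e₂ : ℝ} (hρ : 0 < ρ)
    (he₁ : e₁ ∈ expLSet μ (1 - ε) ρ) (he₂ : e₂ ∈ expLSet μ ε ρ) (one_lt_e₁ : 1 < e₁)
    (one_lt_e₂ : 1 < e₂) :
    diam (univ : Set X) < 3 * ρ * max (log (C ^ 3 * (1 - ε) * e₁) / log e₁)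
      (2 * (log (C ^ 4 * ε * e₂) / log e₂)) := by
  set D := diam (univ : Set X)
  have hDpos : 0 < D := diam_pos nontrivial_univ hbdd
  rw [mul_max_of_nonneg _ _ (by positivity), lt_max_iff]
  by_cases hsmall : ∃ z, μ.real (closedBall z (D / 4)) ≤ ε
  · right
    obtain ⟨z, hz⟩ := hsmall
    have hlt : D / 6 < ρ * (log (C ^ 4 * ε * e₂) / log e₂) :=
      hC.lt_mul_log_div_log_of_measureReal_closedBall_le hbdd hρ he₂ one_lt_e₂
        (z := z) (r := D / 12) (by positivity) (by positivity) (by linarith)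
        (by convert hz using 3; ring)
    linarith
  · left
    push Not at hsmall
    obtain ⟨x, -, y, -, hxy⟩ : ∃ x ∈ univ, ∃ y ∈ (univ : Set X), 17 * D / 24 < dist x y :=
      exists_lt_dist_of_lt_diam (by positivity) (by linarith)
    have hdisj : Disjoint (closedBall x (D / 8 + D / 3)) (closedBall y (D / 4)) :=
      closedBall_disjoint_closedBall (by linarith)
    have hsum : μ.real (closedBall x (D / 8 + D / 3)) + μ.real (closedBall y (D / 4)) ≤ 1 :=
      (measureReal_union hdisj measurableSet_closedBall).symm.trans_le measureReal_le_one
    have hlt : D / 3 < ρ * (log (C ^ 3 * (1 - ε) * e₁) / log e₁) :=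
      hC.lt_mul_log_div_log_of_measureReal_closedBall_le hbdd hρ he₁ one_lt_e₁
        (z := x) (r := D / 8) (by positivity) (by positivity) (by linarith)
        (by linarith [hsmall y])
    linarith

end IsDoubling

theorem stmt16_general {X : Type*} [MetricSpace X] [MeasurableSpace X] [OpensMeasurableSpace X]
    (μ : Measure X) [IsProbabilityMeasure μ] (hbdd : Bornology.IsBounded (univ : Set X))
    {C : ℝ} (hC : IsDoubling μ C) {ε ρ : ℝ} (hε0 : 0 < ε) (hε1 : ε < 1) (hρ : 0 < ρ)
    (hfin1 : BddAbove (expLSet μ (1 - ε) ρ)) (hfin2 : BddAbove (expLSet μ ε ρ))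
    (h1 : 1 < expL μ (1 - ε) ρ) (h2 : 1 < expL μ ε ρ) :
    diam (univ : Set X) ≤ 3 * ρ * max
      (log (C ^ 4 * (1 - ε) * ε⁻¹ * expL μ (1 - ε) ρ) / log (expL μ (1 - ε) ρ))
      (2 * log (C ^ 3 * (3 : ℝ) ^ (log C / log 2) * ε * expL μ ε ρ) / log (expL μ ε ρ)) := by
  have : Nontrivial X := nontrivial_of_bddAbove_expLSet hρ.le (by linarith) hfin1
  have hC1 : 1 ≤ C := hC.1
  have : 0 < 1 - ε := sub_pos.2 hε1
  have hconst₁ : C ^ 3 * (1 - ε) ≤ C ^ 4 * (1 - ε) * ε⁻¹ :=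
    calc
      C ^ 3 * (1 - ε) ≤ C ^ 4 * (1 - ε) := by gcongr; norm_num
      _ ≤ C ^ 4 * (1 - ε) * ε⁻¹ :=
        le_mul_of_one_le_right (by positivity) ((one_le_inv₀ hε0).2 hε1.le)
  have hconst₂ : C ^ 4 * ε ≤ C ^ 3 * (3 : ℝ) ^ (log C / log 2) * ε := by
    rw [pow_succ C 3]
    gcongr
    exact le_rpow_log_div_log one_lt_two (by norm_num) hC1
  refine (hC.diam_univ_lt_mul_max hbdd hρ (expL_mem_expLSet hρ.le hfin1)
    (expL_mem_expLSet hρ.le hfin2) h1 h2).le.trans ?_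
  rw [mul_div_assoc 2]
  gcongr 3 * ρ * max ?_ (2 * ?_)
  · exact log_mul_div_log_le_log_mul_div_log h1 (by positivity) hconst₁
  · exact log_mul_div_log_le_log_mul_div_log h2 (by positivity) hconst₂

theorem stmt16 {X : Type*} [MetricSpace X] [MeasurableSpace X] [BorelSpace X] [Nonempty X]
    (μ : Measure X) [IsProbabilityMeasure μ]
    (hbdd : Bornology.IsBounded (Set.univ : Set X))
    (C : ℝ) (hC : IsDoubling μ C) (ε ρ : ℝ) (hε0 : 0 < ε) (hε1 : ε ≤ 1 / 2) (hρ : 0 < ρ)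
    (hfin1 : BddAbove (expLSet μ (1 - ε) ρ)) (hfin2 : BddAbove (expLSet μ ε ρ))
    (h1 : 1 < expL μ (1 - ε) ρ) (h2 : 1 < expL μ ε ρ) :
    Metric.diam (Set.univ : Set X) ≤ 3 * ρ * max
      (Real.log (C ^ 4 * (1 - ε) * ε⁻¹ * expL μ (1 - ε) ρ) / Real.log (expL μ (1 - ε) ρ))
      (2 * Real.log (C ^ 3 * (3 : ℝ) ^ (Real.log C / Real.log 2) * ε * expL μ ε ρ) /
        Real.log (expL μ ε ρ)) := by
  exact stmt16_general μ hbdd hC hε0 (by linarith) hρ hfin1 hfin2 h1 h2
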